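/- Disjunctive normal form in PPL: for every PPL formula φ there is a PPL formula ψ that is a disjunction of conjunctions of PPL literals (atomic PPL formulas ⟦α⟧ ∘ t or negations thereof) such that ⊢ φ ↔ ψ in the PPL calculus; moreover, if φ is consistent (i.e., not φ ⊢ ⊥, where ⊥ abbreviates ⟦⊤⟧ < 1), then at least one disjunct of ψ is consistent. -/

import Mathlib

open MeasureTheory

/-- Propositional formulas over atoms `B_j`, `j : ℕ`, with `¬` and `→`. -/
inductive PropForm : Type
  | atom : ℕ → PropForm
  | neg : PropForm → PropForm
  | imp : PropForm → PropForm → PropForm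
  deriving DecidableEq

namespace PropForm

def conj (α β : PropForm) : PropForm := neg (imp α (neg β))
def disj (α β : PropForm) : PropForm := imp (neg α) β
def biimp (α β : PropForm) : PropForm := conj (imp α β) (imp β α)
def top : PropForm := imp (atom 0) (atom 0)
def bot : PropForm := neg top

/-- Satisfaction of a formula by a valuation `v : ℕ → Bool` (a subset of ℕ). -/
def sat (v : ℕ → Bool) : PropForm → Prop
  | atom j => v j = true
  | neg α => ¬ sat v α
  | imp α β => sat v α → sat v β

/-- The finite set `B_α` of indices of atoms occurring in `α`. -/
def atoms : PropForm → Finset ℕ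
  | atom j => {j}
  | neg α => atoms α
  | imp α β => atoms α ∪ atoms β

end PropForm

/-- `⊨ α`: every valuation satisfies `α`. -/
def Valid (α : PropForm) : Prop := ∀ v, PropForm.sat v α

/-- `α ⊨ β`. -/
def Entails (α β : PropForm) : Prop := ∀ v, PropForm.sat v α → PropForm.sat v β

/-- `Δ ⊨ α`. -/
def SetEntails (Δ : Set PropForm) (α : PropForm) : Prop :=
  ∀ v, (∀ δ ∈ Δ, PropForm.sat v δ) → PropForm.sat v α

/-- Conjunction of a list of formulas (empty conjunction is `⊤`). -/
def bigConj (l : List PropForm) : PropForm := l.foldr PropForm.conj PropForm.top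

/-- Disjunction of a list of formulas (empty disjunction is `⊥`). -/
def bigDisj (l : List PropForm) : PropForm := l.foldr PropForm.disj PropForm.bot

/-- `φ_A^U = (⋀_{j∈U} B_j) ∧ (⋀_{j∈A∖U} ¬B_j)`. -/
def phi (A U : Finset ℕ) : PropForm :=
  PropForm.conj (bigConj ((U.sort (· ≤ ·)).map PropForm.atom))
    (bigConj (((A \ U).sort (· ≤ ·)).map (fun j => PropForm.neg (PropForm.atom j))))

/-- The space of valuations, `2^ℕ` identified with `{0,1}^ℕ`, with the product σ-algebra. -/
abbrev Val := ℕ → Bool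

/-- `v ∩ A` for a valuation `v` and a finite `A ⊆ ℕ`. -/
def restrict (v : Val) (A : Finset ℕ) : Finset ℕ := A.filter (fun j => v j = true)

/-- `Prob_μ(α) = μ{v : v ⊨ α}`. -/
noncomputable def Prob (μ : Measure Val) (α : PropForm) : ℝ :=
  (μ {v | PropForm.sat v α}).toReal

/-! ## PPL: probabilistic propositional logic -/

/-- RCOF variables: `x_k` for `k ∈ ℕ` and `x_α` for propositional formulas `α`. -/
inductive RVar : Type
  | num : ℕ → RVar
  | fm : PropForm → RVar
  deriving DecidableEq

/-- RCOF terms: built from 0, 1, variables, unary `-`, binary `+` and `×`. -/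
inductive RTerm : Type
  | zero : RTerm
  | one : RTerm
  | var : RVar → RTerm
  | neg : RTerm → RTerm
  | add : RTerm → RTerm → RTerm
  | mul : RTerm → RTerm → RTerm
  deriving DecidableEq

/-- Value of a term in `ℝ` under an assignment. -/
def RTerm.eval (ρ : RVar → ℝ) : RTerm → ℝ
  | zero => 0
  | one => 1
  | var x => ρ x
  | neg t => - t.eval ρ
  | add t s => t.eval ρ + s.eval ρ
  | mul t s => t.eval ρ * s.eval ρ

/-- PPL formulas: atoms `⟦α⟧ = t` and `⟦α⟧ < t`, closed under implication. -/
inductive PPLForm : Type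
  | eq : PropForm → RTerm → PPLForm
  | lt : PropForm → RTerm → PPLForm
  | imp : PPLForm → PPLForm → PPLForm
  deriving DecidableEq

/-- `⊥` in PPL: `⟦⊤⟧ < 1`. -/
def pbot : PPLForm := PPLForm.lt PropForm.top RTerm.one

/-- `¬φ` in PPL: `φ → (⟦⊤⟧ < 1)`. -/
def pneg (φ : PPLForm) : PPLForm := PPLForm.imp φ pbot

/-- `φ ∧ ψ` in PPL. -/
def pconj (φ ψ : PPLForm) : PPLForm := pneg (PPLForm.imp φ (pneg ψ))

/-- `φ ∨ ψ` in PPL. -/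
def pdisj (φ ψ : PPLForm) : PPLForm := PPLForm.imp (pneg φ) ψ

/-- `φ ↔ ψ` in PPL. -/
def piff (φ ψ : PPLForm) : PPLForm := pconj (PPLForm.imp φ ψ) (PPLForm.imp ψ φ)

/-- Conjunction of a nonempty list of PPL formulas (empty list gives `⟦⊤⟧ = 1`). -/
def pBigConj : List PPLForm → PPLForm
  | [] => PPLForm.eq PropForm.top RTerm.one
  | [φ] => φ
  | φ :: l => pconj φ (pBigConj l)

/-- Disjunction of a nonempty list of PPL formulas (empty list gives `⊥`). -/
def pBigDisj : List PPLForm → PPLForm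
  | [] => pbot
  | [φ] => φ
  | φ :: l => pdisj φ (pBigDisj l)

/-- Satisfaction of a PPL formula by a stochastic valuation `μ` and an assignment `ρ`. -/
def PPLForm.sat (μ : MeasureTheory.Measure Val) (ρ : RVar → ℝ) : PPLForm → Prop
  | eq α t => Prob μ α = t.eval ρ
  | lt α t => Prob μ α < t.eval ρ
  | imp φ ψ => φ.sat μ ρ → ψ.sat μ ρ

/-- `Γ ⊨ φ` in PPL. -/
def PPLentails (Γ : Set PPLForm) (φ : PPLForm) : Prop :=
  ∀ μ : MeasureTheory.Measure Val, MeasureTheory.IsProbabilityMeasure μ →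
    ∀ ρ : RVar → ℝ, (∀ γ ∈ Γ, PPLForm.sat μ ρ γ) → PPLForm.sat μ ρ φ

/-- Boolean evaluation of a PPL formula given truth values for its atomic subformulas. -/
def PPLForm.evalAtoms (w : PPLForm → Bool) : PPLForm → Bool
  | imp φ ψ => !(φ.evalAtoms w) || ψ.evalAtoms w
  | φ => w φ

/-- Tautological PPL formulas: true under every assignment of truth values to atomic
PPL formulas; these are exactly the PPL-substitution-instances of classical tautologies. -/
def PPLTaut (φ : PPLForm) : Prop := ∀ w : PPLForm → Bool, φ.evalAtoms w = true

/-- Literals of classical propositional logic. -/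
def IsLiteral (α : PropForm) : Prop :=
  (∃ j, α = PropForm.atom j) ∨ (∃ j, α = PropForm.neg (PropForm.atom j))

/-- Conjunctions of literals. -/
inductive IsLitConj : PropForm → Prop
  | lit {α} : IsLiteral α → IsLitConj α
  | conj {α β} : IsLitConj α → IsLitConj β → IsLitConj (PropForm.conj α β)

/-- `B_Λ`, the union of the atom sets of the formulas `α j`. -/
def BigB {k : ℕ} (α : Fin k → PropForm) : Finset ℕ :=
  Finset.univ.sup fun j => (α j).atoms

/-- `Λ = {c j ℓ}` is an adequate set of DNF-conjuncts for `{α j}`. -/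
structure AdequateDNF {k : ℕ} (α : Fin k → PropForm) (m : Fin k → ℕ)
    (c : (j : Fin k) → Fin (m j) → PropForm) : Prop where
  atoms_eq : ∀ j ℓ, (c j ℓ).atoms = BigB α
  litconj : ∀ j ℓ, IsLitConj (c j ℓ)
  pairwise_incons : ∀ j, ∀ ℓ ℓ' : Fin (m j), ℓ ≠ ℓ' →
      Valid (PropForm.neg (PropForm.conj (c j ℓ) (c j ℓ')))
  equiv : ∀ j, Valid (PropForm.biimp (α j) (bigDisj (List.ofFn (c j))))

/-- The RCOF formula `Q^{α_1,…,α_k}_Λ` holding in `ℝ` under the assignment `ρ`. -/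
def Qcond {k : ℕ} (α : Fin k → PropForm) (m : Fin k → ℕ)
    (c : (j : Fin k) → Fin (m j) → PropForm) (ρ : RVar → ℝ) : Prop :=
  (∀ U ∈ (BigB α).powerset,
      0 ≤ ρ (RVar.fm (phi (BigB α) U)) ∧ ρ (RVar.fm (phi (BigB α) U)) ≤ 1) ∧
  (∑ U ∈ (BigB α).powerset, ρ (RVar.fm (phi (BigB α) U))) = 1 ∧
  (∀ j, ρ (RVar.fm (α j)) = ∑ ℓ : Fin (m j), ρ (RVar.fm (c j ℓ)))

/-- `x ∘ y` where `∘` is `=` if `b` and `<` otherwise. -/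
def rcmp (b : Bool) (x y : ℝ) : Prop := if b then x = y else x < y

/-- The PPL atom `⟦α⟧ ∘ t` where `∘` is `=` if `b` and `<` otherwise. -/
def patom (b : Bool) (α : PropForm) (t : RTerm) : PPLForm :=
  if b then PPLForm.eq α t else PPLForm.lt α t

/-- Side condition of the RR axioms: there is an adequate set of DNF-conjuncts for
`{α_1,…,α_{k+1}}` such that the universal closure of
`(Q ∧ ⋀_{j≤k} x_{α_j} ∘_j t_j) → x_{α_{k+1}} ∘_{k+1} t_{k+1}` holds in `ℝ`. -/
def RRside {k : ℕ} (α : Fin (k + 1) → PropForm) (isEq : Fin (k + 1) → Bool)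
    (t : Fin (k + 1) → RTerm) : Prop :=
  ∃ (m : Fin (k + 1) → ℕ) (c : (j : Fin (k + 1)) → Fin (m j) → PropForm),
    AdequateDNF α m c ∧
    ∀ ρ : RVar → ℝ, Qcond α m c ρ →
      (∀ j : Fin k, rcmp (isEq j.castSucc) (ρ (RVar.fm (α j.castSucc)))
          ((t j.castSucc).eval ρ)) →
      rcmp (isEq (Fin.last k)) (ρ (RVar.fm (α (Fin.last k)))) ((t (Fin.last k)).eval ρ)

/-- The RR axiom `(⟦α_1⟧ ∘_1 t_1 ∧ … ∧ ⟦α_k⟧ ∘_k t_k) → ⟦α_{k+1}⟧ ∘_{k+1} t_{k+1}`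
(for `k = 0` it is just the conclusion). -/
def rrFormula {k : ℕ} (α : Fin (k + 1) → PropForm) (isEq : Fin (k + 1) → Bool)
    (t : Fin (k + 1) → RTerm) : PPLForm :=
  match k with
  | 0 => patom (isEq (Fin.last 0)) (α (Fin.last 0)) (t (Fin.last 0))
  | k + 1 => PPLForm.imp
      (pBigConj (List.ofFn fun j : Fin (k + 1) =>
        patom (isEq j.castSucc) (α j.castSucc) (t j.castSucc)))
      (patom (isEq (Fin.last (k + 1))) (α (Fin.last (k + 1))) (t (Fin.last (k + 1))))

/-- The PPL calculus: hypotheses, TAUT, RR and modus ponens. -/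
inductive PPLderiv (Γ : Set PPLForm) : PPLForm → Prop
  | hyp {φ} : φ ∈ Γ → PPLderiv Γ φ
  | taut {φ} : PPLTaut φ → PPLderiv Γ φ
  | rr {k : ℕ} (α : Fin (k + 1) → PropForm) (isEq : Fin (k + 1) → Bool)
      (t : Fin (k + 1) → RTerm) :
      RRside α isEq t → PPLderiv Γ (rrFormula α isEq t)
  | mp {φ ψ} : PPLderiv Γ (PPLForm.imp φ ψ) → PPLderiv Γ φ → PPLderiv Γ ψ

/-- Atomic PPL formulas `⟦α⟧ = t` or `⟦α⟧ < t`. -/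
def IsPPLAtomic (φ : PPLForm) : Prop :=
  ∃ α t, φ = PPLForm.eq α t ∨ φ = PPLForm.lt α t

/-- PPL literals: atomic PPL formulas or negations thereof. -/
def IsPPLLiteral (φ : PPLForm) : Prop :=
  IsPPLAtomic φ ∨ ∃ χ, IsPPLAtomic χ ∧ φ = pneg χ

/-- Structural disjunctive normal form of `φ` (for `true`) or of its negation (for `false`). -/
def dnfAux : Bool → PPLForm → List (List PPLForm)
  | true, PPLForm.imp φ ψ => dnfAux false φ ++ dnfAux true ψ
  | false, PPLForm.imp φ ψ =>
      (dnfAux true φ).flatMap fun l => (dnfAux false ψ).map fun l' => l ++ l'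
  | true, φ => [[φ]]
  | false, φ => [[pneg φ]]

theorem evalAtoms_imp (w : PPLForm → Bool) (φ ψ : PPLForm) :
    (PPLForm.imp φ ψ).evalAtoms w = (!(φ.evalAtoms w) || ψ.evalAtoms w) := rfl

theorem evalAtoms_pbot (w : PPLForm → Bool) : pbot.evalAtoms w = w pbot := rfl

theorem evalAtoms_pBigConj (w : PPLForm → Bool) (hw : w pbot = false) :
    ∀ l : List PPLForm, l ≠ [] →
      (pBigConj l).evalAtoms w = l.all (fun χ => χ.evalAtoms w)
  | [], h => absurd rfl h
  | [φ], _ => by simp [pBigConj]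
  | φ :: ψ :: l, _ => by
      have ih := evalAtoms_pBigConj w hw (ψ :: l) (by simp)
      rw [pBigConj, pconj, pneg, pneg, evalAtoms_imp, evalAtoms_imp, evalAtoms_imp,
        evalAtoms_pbot, hw, ih, List.all_cons (a := φ)]
      · simp
      · simp

theorem evalAtoms_pBigDisj (w : PPLForm → Bool) (hw : w pbot = false) :
    ∀ l : List PPLForm, (pBigDisj l).evalAtoms w = l.any (fun χ => χ.evalAtoms w)
  | [] => by simp [pBigDisj, evalAtoms_pbot, hw]
  | [φ] => by simp [pBigDisj]
  | φ :: ψ :: l => by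
      have ih := evalAtoms_pBigDisj w hw (ψ :: l)
      rw [pBigDisj, pdisj, pneg, evalAtoms_imp, evalAtoms_imp,
        evalAtoms_pbot, hw, ih, List.any_cons (a := φ)]
      · simp
      · simp

theorem dnfAux_lit (φ : PPLForm) :
    ∀ b, ∀ l ∈ dnfAux b φ, l ≠ [] ∧ ∀ χ ∈ l, IsPPLLiteral χ := by
  induction φ with
  | eq α t =>
    have ha : IsPPLAtomic (PPLForm.eq α t) := ⟨α, t, Or.inl rfl⟩
    intro b l hl
    cases b <;> simp only [dnfAux, List.mem_singleton] at hl <;> subst hl <;>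
      simp only [List.mem_singleton, forall_eq, ne_eq, List.cons_ne_nil, not_false_eq_true,
        true_and]
    · exact Or.inr ⟨_, ha, rfl⟩
    · exact Or.inl ha
  | lt α t =>
    have ha : IsPPLAtomic (PPLForm.lt α t) := ⟨α, t, Or.inr rfl⟩
    intro b l hl
    cases b <;> simp only [dnfAux, List.mem_singleton] at hl <;> subst hl <;>
      simp only [List.mem_singleton, forall_eq, ne_eq, List.cons_ne_nil, not_false_eq_true,
        true_and]
    · exact Or.inr ⟨_, ha, rfl⟩
    · exact Or.inl ha
  | imp φ ψ ih1 ih2 =>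
    intro b l hl
    cases b
    · simp only [dnfAux, List.mem_flatMap, List.mem_map] at hl
      obtain ⟨l1, h1, l2, h2, rfl⟩ := hl
      refine ⟨by simp [(ih1 _ _ h1).1], fun χ hχ => ?_⟩
      rcases List.mem_append.1 hχ with h | h
      · exact (ih1 _ _ h1).2 χ h
      · exact (ih2 _ _ h2).2 χ h
    · simp only [dnfAux, List.mem_append] at hl
      rcases hl with h | h
      · exact ih1 _ _ h
      · exact ih2 _ _ h

theorem dnfAux_eval (w : PPLForm → Bool) (hw : w pbot = false) (φ : PPLForm) :
    ∀ b, (∃ l ∈ dnfAux b φ, ∀ χ ∈ l, χ.evalAtoms w = true) ↔ φ.evalAtoms w = b := by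
  induction φ with
  | eq α t => intro b; cases b <;> simp [dnfAux, pneg, evalAtoms_imp, evalAtoms_pbot, hw]
  | lt α t => intro b; cases b <;> simp [dnfAux, pneg, evalAtoms_imp, evalAtoms_pbot, hw]
  | imp φ ψ ih1 ih2 =>
    intro b
    cases b
    · rw [evalAtoms_imp, Bool.or_eq_false_iff, Bool.not_eq_false', ← ih1, ← ih2]
      simp only [dnfAux, List.mem_flatMap, List.mem_map]
      constructor
      · rintro ⟨l, ⟨l1, h1, l2, h2, rfl⟩, h⟩
        exact ⟨⟨l1, h1, fun χ hχ => h χ (List.mem_append_left _ hχ)⟩,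
          ⟨l2, h2, fun χ hχ => h χ (List.mem_append_right _ hχ)⟩⟩
      · rintro ⟨⟨l1, h1, g1⟩, ⟨l2, h2, g2⟩⟩
        refine ⟨l1 ++ l2, ⟨l1, h1, l2, h2, rfl⟩, fun χ hχ => ?_⟩
        rcases List.mem_append.1 hχ with h | h
        · exact g1 χ h
        · exact g2 χ h
    · rw [evalAtoms_imp, Bool.or_eq_true, Bool.not_eq_true', ← ih1, ← ih2]
      simp only [dnfAux, List.mem_append, or_and_right, exists_or]

theorem dnf_eval (w : PPLForm → Bool) (hw : w pbot = false) (φ : PPLForm) :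
    (pBigDisj ((dnfAux true φ).map pBigConj)).evalAtoms w = φ.evalAtoms w := by
  rw [Bool.eq_iff_iff, ← dnfAux_eval w hw φ true, evalAtoms_pBigDisj w hw]
  simp only [List.any_map, List.any_eq_true, Function.comp]
  refine exists_congr fun l => and_congr_right fun hl => ?_
  rw [evalAtoms_pBigConj w hw l (dnfAux_lit φ _ l hl).1, List.all_eq_true]

theorem PPLderiv.deduction {φ ψ : PPLForm} (h : PPLderiv {φ} ψ) :
    PPLderiv ∅ (PPLForm.imp φ ψ) := by
  have key : ∀ χ, PPLderiv ∅ χ → PPLderiv ∅ (PPLForm.imp φ χ) := fun χ hχ =>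
    .mp (.taut (fun w => by
      simp only [evalAtoms_imp]
      cases φ.evalAtoms w <;> cases χ.evalAtoms w <;> rfl)) hχ
  induction h with
  | hyp h =>
    rw [Set.mem_singleton_iff] at h
    subst h
    exact .taut (fun w => by simp [evalAtoms_imp])
  | taut h => exact key _ (.taut h)
  | rr α e t h => exact key _ (.rr α e t h)
  | @mp a b _ _ ih1 ih2 =>
    refine .mp (.mp (.taut (fun w => ?_)) ih1) ih2
    simp only [evalAtoms_imp]
    cases φ.evalAtoms w <;> cases a.evalAtoms w <;> cases b.evalAtoms w <;> rfl

theorem PPLderiv.weaken {Γ : Set PPLForm} {ψ : PPLForm} (h : PPLderiv ∅ ψ) :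
    PPLderiv Γ ψ := by
  induction h with
  | hyp h => exact absurd h (Set.notMem_empty _)
  | taut h => exact .taut h
  | rr α e t h => exact .rr α e t h
  | mp _ _ ih1 ih2 => exact .mp ih1 ih2

theorem pBigDisj_bot : ∀ l : List PPLForm,
    (∀ χ ∈ l, PPLderiv ∅ (PPLForm.imp χ pbot)) → PPLderiv ∅ (PPLForm.imp (pBigDisj l) pbot)
  | [], _ => .taut (fun w => by simp [pBigDisj, evalAtoms_imp])
  | [φ], h => h φ (by simp)
  | φ :: ψ :: l, h => by
      have ih := pBigDisj_bot (ψ :: l) (fun χ hχ => h χ (List.mem_cons_of_mem _ hχ))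
      refine .mp (.mp (.taut (fun w => ?_)) (h φ (by simp))) ih
      have e : pBigDisj (φ :: ψ :: l) = pdisj φ (pBigDisj (ψ :: l)) := rfl
      rw [e]
      generalize pBigDisj (ψ :: l) = δ
      simp only [evalAtoms_imp, pdisj, pneg]
      cases φ.evalAtoms w <;> cases δ.evalAtoms w <;> cases pbot.evalAtoms w <;> rfl

/-- every PPL formula `φ` is provably equivalent to a disjunction of
conjunctions of PPL literals; moreover, if `φ` is consistent then so is at least one of
the disjuncts. -/
theorem ppl_dnf (φ : PPLForm) :
    ∃ d : List (List PPLForm),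
      (∀ l ∈ d, ∀ χ ∈ l, IsPPLLiteral χ) ∧
      PPLderiv ∅ (piff φ (pBigDisj (d.map pBigConj))) ∧
      (¬ PPLderiv {φ} pbot → ∃ l ∈ d, ¬ PPLderiv {pBigConj l} pbot) := by
  have hiff : PPLderiv ∅ (piff φ (pBigDisj ((dnfAux true φ).map pBigConj))) := by
    refine .taut (fun w => ?_)
    simp only [piff, pconj, pneg, evalAtoms_imp, evalAtoms_pbot]
    cases hw : w pbot
    · rw [dnf_eval w hw φ]
      cases φ.evalAtoms w <;> rfl
    · simp
  refine ⟨dnfAux true φ, fun l hl => (dnfAux_lit φ _ l hl).2, hiff, fun hcon => ?_⟩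
  by_contra hno
  push Not at hno
  apply hcon
  have hbot := pBigDisj_bot ((dnfAux true φ).map pBigConj) (by
    intro χ hχ
    obtain ⟨l, hl, rfl⟩ := List.mem_map.1 hχ
    exact (hno l hl).deduction)
  refine .mp (.mp (.mp (.taut (fun w => ?_)) hiff.weaken) hbot.weaken) (.hyp rfl)
  generalize pBigDisj ((dnfAux true φ).map pBigConj) = δ
  simp only [piff, pconj, pneg, evalAtoms_imp]
  cases φ.evalAtoms w <;> cases δ.evalAtoms w <;> cases pbot.evalAtoms w <;> rfl
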